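/- Let 𝔽 be the field of real algebraic numbers. If an ortholattice term t is a tautology of the subspace ortholattice L(𝔽^{2^n}) for every n ≥ 0, then t is a tautology of the subspace ortholattice L(ℂ^k) for every k ≥ 1. -/

import Mathlib

set_option synthInstance.maxHeartbeats 1000000

/-- The field of real algebraic numbers, viewed as a subfield of `ℝ`
(the relative algebraic closure of `ℚ` in `ℝ`). -/
noncomputable abbrev RealAlg : Type := algebraicClosure ℚ ℝ

/-- The orthogonal complement of a subspace of `F^m` with respect to the standard
bilinear form `⟨x, y⟩ = ∑ xᵢ yᵢ`. -/
def orthF {F : Type*} [Field F] {m : ℕ} (U : Submodule F (Fin m → F)) :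
    Submodule F (Fin m → F) where
  carrier := {y | ∀ x ∈ U, ∑ i, x i * y i = 0}
  add_mem' := by
    intro p q hp hq x hx
    simp only [Pi.add_apply, mul_add, Finset.sum_add_distrib, hp x hx, hq x hx, add_zero]
  zero_mem' := by intro x hx; simp
  smul_mem' := by
    intro c p hp x hx
    simp only [Pi.smul_apply, smul_eq_mul, mul_left_comm, ← Finset.mul_sum, hp x hx, mul_zero]

/-- Ortholattice terms in the operations ∧, ∨, ', 0, 1 with variables indexed by ℕ. -/
inductive OLTerm : Type
  | var : ℕ → OLTerm
  | zero : OLTerm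
  | one : OLTerm
  | inf : OLTerm → OLTerm → OLTerm
  | sup : OLTerm → OLTerm → OLTerm
  | compl : OLTerm → OLTerm

/-- Evaluation of an ortholattice term in the ortholattice `L(F^m)` of all linear
subspaces of `F^m`, with ' interpreted as the orthogonal complement for the standard
bilinear form. -/
def OLTerm.evalF {F : Type*} [Field F] {m : ℕ} (v : ℕ → Submodule F (Fin m → F)) :
    OLTerm → Submodule F (Fin m → F)
  | var i => v i
  | zero => ⊥
  | one => ⊤
  | inf t s => t.evalF v ⊓ s.evalF v
  | sup t s => t.evalF v ⊔ s.evalF v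
  | compl t => orthF (t.evalF v)

/-- Evaluation of an ortholattice term in the ortholattice of all linear subspaces of a
complex inner product space. -/
noncomputable def OLTerm.evalSub {H : Type*} [NormedAddCommGroup H]
    [InnerProductSpace ℂ H] (v : ℕ → Submodule ℂ H) : OLTerm → Submodule ℂ H
  | var i => v i
  | zero => ⊥
  | one => ⊤
  | inf t s => t.evalSub v ⊓ s.evalSub v
  | sup t s => t.evalSub v ⊔ s.evalSub v
  | compl t => (t.evalSub v)ᗮ

/-!
The sequences in a relatively algebraically closed subfield `F` of `ℝ` that converge in `ℝ`, taken
up to eventual equality, form a local ring with residue field `ℝ`. It is Henselian: near a simple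
real root the polynomial changes sign, hence so do its approximations over `F`, whose real roots
lie in `F`. A Henselian local ring of residue characteristic zero contains a copy of its residue
field, namely any maximal subring on which the residue map is injective, so `ℝ` embeds into the
ring of germs at infinity of sequences in `F`.

Such an embedding specializes a subspace of `ℝ^m` to a sequence of subspaces of `F^m`, through
representatives of the entries of a spanning matrix. Inclusion and orthogonality of column spaces
are matrix identities, so `⊔` and `ᗮ` are eventually preserved, and tautologies pass from `L(F^m)`
to `L(ℝ^m)`. Finally, a complex space of dimension `k` embeds isometrically into `ℝ^m` as soon as
`2 * k ≤ m`; the pairs `(V, U)` of a real and a complex subspace that the embedding and its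
adjoint map into each other are closed under the ortholattice operations, and `V = ⊤` forces
`U = ⊤`.
-/

open Polynomial Filter Topology Matrix

section CoefficientField

variable {R L : Type*} [CommRing R] [Field L] {π : R →+* L} {K : Subring R}

lemma exists_maximal_subring_injOn [CharZero L] (π : R →+* L) :
    ∃ K : Subring R, Maximal (fun K : Subring R => Set.InjOn π K) K := by
  have injOn_bot : Set.InjOn π (⊥ : Subring R) := by
    rintro _ ⟨a, rfl⟩ _ ⟨b, rfl⟩ hab
    rw [eq_intCast, eq_intCast, map_intCast, map_intCast, Int.cast_inj] at hab
    rw [hab]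
  have chain_bounded (c : Set (Subring R)) (hc : c ⊆ {K : Subring R | Set.InjOn π K})
      (hchain : IsChain (· ≤ ·) c) (K₀ : Subring R) (hK₀ : K₀ ∈ c) :
      ∃ K' : Subring R, Set.InjOn π K' ∧ ∀ K ∈ c, K ≤ K' := by
    have mem_sSup {x : R} := Subring.mem_sSup_of_directedOn (x := x) ⟨K₀, hK₀⟩ hchain.directedOn
    refine ⟨sSup c, fun x hx y hy hxy => ?_, fun K hK => le_sSup hK⟩
    obtain ⟨K₁, hK₁, hx⟩ := mem_sSup.mp hx
    obtain ⟨K₂, hK₂, hy⟩ := mem_sSup.mp hy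
    obtain ⟨K, hK, h₁, h₂⟩ := hchain.directedOn K₁ hK₁ K₂ hK₂
    exact hc hK (h₁ hx) (h₂ hy) hxy
  obtain ⟨K, -, hK⟩ := zorn_le_nonempty₀ _ chain_bounded ⊥ injOn_bot
  exact ⟨K, hK⟩

lemma range_le_of_maximal_injOn (hK : Maximal (fun K : Subring R => Set.InjOn π K) K)
    {A : Type*} [Ring A] (e : A →+* R) (he : Function.Injective (π.comp e)) (hKe : K ≤ e.range) :
    e.range ≤ K := by
  refine hK.le_of_ge ?_ hKe
  rintro _ ⟨a, rfl⟩ _ ⟨b, rfl⟩ hab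
  exact congrArg e (he hab)

lemma isField_of_maximal_injOn [IsLocalHom π]
    (hK : Maximal (fun K : Subring R => Set.InjOn π K) K) : IsField K := by
  have hinj : Function.Injective (π.comp K.subtype) := fun x y hxy => Subtype.ext (hK.1 x.2 y.2 hxy)
  have : IsDomain K := hinj.isDomain (π.comp K.subtype)
  have isUnit_subtype (y : nonZeroDivisors K) : IsUnit (K.subtype y) :=
    .of_map π _ <| IsUnit.mk0 _ <|
      (map_ne_zero_iff (π.comp K.subtype) hinj).mpr (nonZeroDivisors.coe_ne_zero y)
  let e : FractionRing K →+* R := IsLocalization.lift isUnit_subtype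
  have e_algebraMap (x : K) : e (algebraMap K _ x) = x := IsLocalization.lift_eq _ x
  have hrange : e.range ≤ K := range_le_of_maximal_injOn hK e (π.comp e).injective
    fun x hx => ⟨algebraMap K _ ⟨x, hx⟩, e_algebraMap _⟩
  refine ⟨⟨0, 1, zero_ne_one⟩, mul_comm, fun {x} hx => ?_⟩
  refine ⟨⟨e (algebraMap K _ x)⁻¹, hrange ⟨_, rfl⟩⟩, Subtype.ext ?_⟩
  rw [Subring.coe_mul, ← e_algebraMap x, ← map_mul, mul_inv_cancel₀ (by simpa using hx), map_one,
    Subring.coe_one]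

lemma exists_isRoot_of_eval₂_eq_zero [HenselianLocalRing R] (hπ : Function.Surjective π)
    {f : R[X]} (hf : f.Monic) {θ : L} (root : f.eval₂ π θ = 0)
    (simple : f.derivative.eval₂ π θ ≠ 0) : ∃ η, f.IsRoot η ∧ π η = θ := by
  have mem_maximalIdeal {x : R} : x ∈ IsLocalRing.maximalIdeal R ↔ π x = 0 := by
    rw [← IsLocalRing.ker_eq_maximalIdeal π hπ, RingHom.mem_ker]
  obtain ⟨η₀, rfl⟩ := hπ θ
  rw [eval₂_at_apply] at root simple
  obtain ⟨η, hη, hηη₀⟩ := HenselianLocalRing.is_henselian f hf η₀ (mem_maximalIdeal.mpr root)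
    (IsLocalRing.notMem_maximalIdeal.mp (mem_maximalIdeal.not.mpr simple))
  rw [mem_maximalIdeal, map_sub, sub_eq_zero] at hηη₀
  exact ⟨η, hη, hηη₀⟩

lemma exists_mem_of_maximal_injOn [CharZero L] [HenselianLocalRing R]
    (hπ : Function.Surjective π) (hK : Maximal (fun K : Subring R => Set.InjOn π K) K) (θ : L) :
    ∃ η ∈ K, π η = θ := by
  have : IsLocalHom π := .of_surjective π hπ
  let _ : Field K := (isField_of_maximal_injOn hK).toField
  let _ : Algebra K L := (π.comp K.subtype).toAlgebra
  have : CharZero K := (algebraMap K L).charZero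
  by_cases hθ : IsIntegral K θ
  · have : Fact (Irreducible (minpoly K θ)) := ⟨minpoly.irreducible hθ⟩
    have root : ((minpoly K θ).map K.subtype).eval₂ π θ = 0 := by
      rw [eval₂_map]
      exact minpoly.aeval K θ
    have simple : ((minpoly K θ).map K.subtype).derivative.eval₂ π θ ≠ 0 := by
      rw [derivative_map, eval₂_map]
      exact (minpoly.irreducible hθ).separable.aeval_derivative_ne_zero (minpoly.aeval K θ)
    obtain ⟨η, hη, hηθ⟩ :=
      exists_isRoot_of_eval₂_eq_zero hπ ((minpoly.monic hθ).map K.subtype) root simple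
    let e : AdjoinRoot (minpoly K θ) →+* R := AdjoinRoot.lift K.subtype η (by rwa [← eval_map])
    refine ⟨η, range_le_of_maximal_injOn hK e (π.comp e).injective
      (fun x hx => ⟨.of _ ⟨x, hx⟩, by simp [e]⟩) ⟨.root _, by simp [e]⟩, hηθ⟩
  · obtain ⟨η, rfl⟩ := hπ θ
    let e : K[X] →+* R := eval₂RingHom K.subtype η
    have he : Function.Injective (π.comp e) := by
      convert transcendental_iff_injective.mp (isAlgebraic_iff_isIntegral.not.mpr hθ)
      exact funext fun p => hom_eval₂ p K.subtype π η
    exact ⟨η, range_le_of_maximal_injOn hK e he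
      (fun x hx => ⟨C ⟨x, hx⟩, by simp [e]⟩) ⟨X, by simp [e]⟩, rfl⟩

theorem exists_ringHom_section [CharZero L] [HenselianLocalRing R] (hπ : Function.Surjective π) :
    ∃ σ : L →+* R, π.comp σ = RingHom.id L := by
  obtain ⟨K, hK⟩ := exists_maximal_subring_injOn π
  have bijective : Function.Bijective (π.comp K.subtype) :=
    ⟨fun x y hxy => Subtype.ext (hK.1 x.2 y.2 hxy),
      fun θ => let ⟨η, hη, hηθ⟩ := exists_mem_of_maximal_injOn hπ hK θ; ⟨⟨η, hη⟩, hηθ⟩⟩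
  let e := RingEquiv.ofBijective _ bijective
  exact ⟨K.subtype.comp e.symm, RingHom.ext e.apply_symm_apply⟩

end CoefficientField

section ConvergentGerms

lemma exists_tendsto_of_eventually_exists_dist_lt {α X : Type*} [PseudoMetricSpace X] {u : α → X}
    {x : X} {s : ℕ → Set α} (h : ∀ ε > 0, ∀ᶠ n in atTop, ∃ y ∈ s n, dist x (u y) < ε) :
    ∃ y : ℕ → α, Tendsto (fun n => u (y n)) atTop (𝓝 x) ∧ ∀ᶠ n in atTop, y n ∈ s n := by
  let d (n : ℕ) := Metric.infDist x (u '' s n)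
  have d_lt_iff {n : ℕ} (hn : (s n).Nonempty) {ε : ℝ} : d n < ε ↔ ∃ y ∈ s n, dist x (u y) < ε := by
    simp only [d, Metric.infDist_lt_iff (hn.image u), Set.exists_mem_image]
  have nonempty : ∀ᶠ n in atTop, (s n).Nonempty :=
    (h 1 one_pos).mono fun n ⟨y, hy, _⟩ => ⟨y, hy⟩
  have d_tendsto : Tendsto d atTop (𝓝 0) := by
    refine tendsto_order.mpr ⟨fun ε hε => .of_forall fun n => hε.trans_le Metric.infDist_nonneg,
      fun ε hε => ?_⟩
    filter_upwards [h ε hε, nonempty] with n hn hs using (d_lt_iff hs).mpr hn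
  have nearly_closest : ∀ᶠ n in atTop, ∃ y, y ∈ s n ∧ dist x (u y) < d n + 1 / (n + 1) := by
    filter_upwards [nonempty] with n hn
    exact (d_lt_iff hn).mp (lt_add_of_pos_right _ Nat.one_div_pos_of_nat)
  obtain ⟨_, ⟨y₀, -⟩⟩ := nonempty.exists
  have : Nonempty α := ⟨y₀⟩
  obtain ⟨y, hy⟩ := skolem.mp nearly_closest
  refine ⟨y, tendsto_iff_dist_tendsto_zero.mpr ?_, hy.mono fun n => And.left⟩
  refine squeeze_zero' (.of_forall fun n => dist_nonneg) (hy.mono fun n hn => ?_)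
    (by simpa only [add_zero] using d_tendsto.add tendsto_one_div_add_atTop_nhds_zero_nat)
  exact dist_comm x (u (y n)) ▸ hn.2.le

lemma exists_neg_and_pos_of_eval_derivative_ne_zero {q : ℝ[X]} {θ : ℝ} (root : q.eval θ = 0)
    (simple : q.derivative.eval θ ≠ 0) {ε : ℝ} (hε : 0 < ε) :
    (∃ a ∈ Metric.ball θ ε, q.eval a < 0) ∧ ∃ b ∈ Metric.ball θ ε, 0 < q.eval b := by
  have not_extr (h : IsLocalExtr (fun x => q.eval x) θ) : False :=
    simple (by rw [← Polynomial.deriv, h.deriv_eq_zero])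
  constructor <;> by_contra! h
  · exact not_extr <| .inl <| by
      filter_upwards [Metric.ball_mem_nhds θ hε] with x hx using root.trans_le (h x hx)
  · exact not_extr <| .inr <| by
      filter_upwards [Metric.ball_mem_nhds θ hε] with x hx using (h x hx).trans_eq root.symm

variable {F : Type*} [Field F] [Algebra F ℝ]

lemma exists_isRoot_mem_of_neg_of_pos [IsIntegrallyClosedIn F ℝ] {p : F[X]} {s : Set ℝ}
    (hs : IsPreconnected s) {a b : ℝ} (ha : a ∈ s) (hb : b ∈ s)
    (hpa : aeval a p < 0) (hpb : 0 < aeval b p) :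
    ∃ c, algebraMap F ℝ c ∈ s ∧ p.IsRoot c := by
  obtain ⟨c, hc, hpc⟩ := hs.intermediate_value ha hb (f := fun x => aeval x p) (by fun_prop)
    ⟨hpa.le, hpb.le⟩
  have c_integral : IsIntegral F c :=
    isAlgebraic_iff_isIntegral.mp ⟨p, by rintro rfl; simp at hpa, hpc⟩
  obtain ⟨c, rfl⟩ := (IsIntegralClosure.isIntegral_iff (A := F)).mp c_integral
  exact ⟨c, hc, (algebraMap F ℝ).injective (by simpa [aeval_algebraMap_apply] using hpc)⟩

variable (F) in
/-- The ring of convergent sequences in `F ⊆ ℝ`, each paired with its limit. -/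
def convergentSequences : Subring (ℝ × (ℕ → F)) where
  carrier := {x | Tendsto (fun n => algebraMap F ℝ (x.2 n)) atTop (𝓝 x.1)}
  zero_mem' := by simp
  one_mem' := by simp
  add_mem' hx hy := by simpa using hx.add hy
  mul_mem' hx hy := by simpa using hx.mul hy
  neg_mem' hx := by simpa using hx.neg

namespace convergentSequences

variable (F) in
/-- The limit of a convergent sequence. -/
def limit : convergentSequences F →+* ℝ := (RingHom.fst ℝ _).comp (convergentSequences F).subtype

variable (F) in
/-- The `n`-th term of a convergent sequence. -/
def term (n : ℕ) : convergentSequences F →+* F :=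
  (Pi.evalRingHom (fun _ => F) n).comp <| (RingHom.snd ℝ _).comp (convergentSequences F).subtype

lemma tendsto_term (x : convergentSequences F) :
    Tendsto (fun n => algebraMap F ℝ (term F n x)) atTop (𝓝 (limit F x)) := x.2

lemma exists_limit_eq {x : ℕ → F} {a : ℝ}
    (h : Tendsto (fun n => algebraMap F ℝ (x n)) atTop (𝓝 a)) :
    ∃ y, limit F y = a ∧ ∀ n, term F n y = x n :=
  ⟨⟨(a, x), h⟩, rfl, fun _ => rfl⟩

lemma limit_surjective : Function.Surjective (limit F) := by
  intro a
  obtain ⟨x, -, -, hx⟩ := Real.exists_seq_rat_strictMono_tendsto a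
  obtain ⟨y, hy, -⟩ := exists_limit_eq (F := F) (x := fun n => (x n : F)) (by simpa using hx)
  exact ⟨y, hy⟩

lemma tendsto_eval_term (f : (convergentSequences F)[X]) (x : convergentSequences F) :
    Tendsto (fun n => algebraMap F ℝ ((f.map (term F n)).eval (term F n x))) atTop
      (𝓝 ((f.map (limit F)).eval (limit F x))) := by
  simpa only [eval_map, eval₂_at_apply] using tendsto_term (f.eval x)

lemma eventually_exists_isRoot_dist_lt [IsIntegrallyClosedIn F ℝ] {f : (convergentSequences F)[X]}
    {θ : ℝ} (root : (f.map (limit F)).eval θ = 0)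
    (simple : (f.map (limit F)).derivative.eval θ ≠ 0) {ε : ℝ} (hε : 0 < ε) :
    ∀ᶠ n in atTop, ∃ c, (f.map (term F n)).IsRoot c ∧ dist θ (algebraMap F ℝ c) < ε := by
  obtain ⟨⟨a, ha, hfa⟩, b, hb, hfb⟩ := exists_neg_and_pos_of_eval_derivative_ne_zero root simple hε
  obtain ⟨x, rfl⟩ := limit_surjective (F := F) a
  obtain ⟨y, rfl⟩ := limit_surjective (F := F) b
  filter_upwards [(tendsto_eval_term f x).eventually_lt_const hfa,
    (tendsto_eval_term f y).eventually_const_lt hfb,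
    (tendsto_term x).eventually_mem (Metric.isOpen_ball.mem_nhds ha),
    (tendsto_term y).eventually_mem (Metric.isOpen_ball.mem_nhds hb)] with n hfx hfy hx hy
  rw [← aeval_algebraMap_apply_eq_algebraMap_eval] at hfx hfy
  obtain ⟨c, hc, hfc⟩ := exists_isRoot_mem_of_neg_of_pos Metric.isPreconnected_ball hx hy hfx hfy
  exact ⟨c, hfc, Metric.mem_ball'.mp hc⟩

lemma exists_eventually_term_eval_eq_zero [IsIntegrallyClosedIn F ℝ]
    {f : (convergentSequences F)[X]} {x : convergentSequences F}
    (root : limit F (f.eval x) = 0) (simple : limit F (f.derivative.eval x) ≠ 0) :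
    ∃ y, limit F y = limit F x ∧ ∀ᶠ n in atTop, term F n (f.eval y) = 0 := by
  rw [← eval_map_apply] at root simple
  rw [← derivative_map] at simple
  obtain ⟨η, hη, hfη⟩ := exists_tendsto_of_eventually_exists_dist_lt
    (s := fun n => {c | (f.map (term F n)).IsRoot c})
    fun ε hε => eventually_exists_isRoot_dist_lt root simple hε
  obtain ⟨y, hy, hyη⟩ := exists_limit_eq hη
  refine ⟨y, hy, hfη.mono fun n hn => ?_⟩
  rw [← eval_map_apply, hyη]
  exact hn

end convergentSequences

open convergentSequences

variable (F) in
/-- The map sending a convergent sequence to its limit and its germ at infinity. -/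
def limitAndGerm : convergentSequences F →+* ℝ × Germ (atTop : Filter ℕ) F :=
  ((RingHom.id ℝ).prodMap (Germ.coeRingHom atTop)).comp (convergentSequences F).subtype

variable (F) in
/-- The ring of germs at infinity of convergent sequences in `F ⊆ ℝ`, each paired with its limit.
It is a local ring with residue field `ℝ`, Henselian if `F` is relatively algebraically closed. -/
abbrev ConvergentGerms : Type _ := (limitAndGerm F).range

namespace ConvergentGerms

variable (F) in
/-- The limit of a convergent germ. -/
def limit : ConvergentGerms F →+* ℝ := (RingHom.fst ℝ _).comp (limitAndGerm F).range.subtype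

variable (F) in
/-- The germ underlying a convergent germ. -/
def germ : ConvergentGerms F →+* Germ (atTop : Filter ℕ) F :=
  (RingHom.snd ℝ _).comp (limitAndGerm F).range.subtype

variable (F) in
/-- The convergent germ of a convergent sequence. -/
def mk : convergentSequences F →+* ConvergentGerms F := (limitAndGerm F).rangeRestrict

lemma mk_surjective : Function.Surjective (mk F) := (limitAndGerm F).rangeRestrict_surjective

lemma limit_mk (x : convergentSequences F) : limit F (mk F x) = convergentSequences.limit F x := rfl

lemma mk_eq_mk {x y : convergentSequences F}
    (hl : convergentSequences.limit F x = convergentSequences.limit F y)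
    (h : ∀ᶠ n in atTop, term F n x = term F n y) : mk F x = mk F y :=
  Subtype.ext (Prod.ext hl (Germ.coe_eq.mpr h))

lemma limit_surjective : Function.Surjective (limit F) :=
  .of_comp (g := mk F) convergentSequences.limit_surjective

instance : IsLocalHom (limit F) where
  map_nonunit r hr := by
    obtain ⟨x, rfl⟩ := mk_surjective r
    rw [limit_mk, isUnit_iff_ne_zero] at hr
    obtain ⟨y, hy, hyx⟩ := exists_limit_eq (x := fun n => (term F n x)⁻¹)
      (by simpa using (tendsto_term x).inv₀ hr)
    refine .of_mul_eq_one (mk F y) ?_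
    rw [← map_mul, ← map_one (mk F)]
    refine mk_eq_mk (by rw [map_mul, hy, mul_inv_cancel₀ hr, map_one]) ?_
    filter_upwards [(tendsto_term x).eventually_ne hr] with n hn
    rw [map_mul, hyx, mul_inv_cancel₀ (by simpa using hn), map_one]

instance : IsLocalRing (ConvergentGerms F) := (limit F).domain_isLocalRing

instance [IsIntegrallyClosedIn F ℝ] : HenselianLocalRing (ConvergentGerms F) where
  is_henselian f _ r root simple := by
    obtain ⟨f, rfl⟩ := Polynomial.map_surjective _ mk_surjective f
    obtain ⟨x, rfl⟩ := mk_surjective r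
    rw [← IsLocalRing.ker_eq_maximalIdeal (limit F) limit_surjective] at root ⊢
    rw [derivative_map, eval_map_apply] at simple
    rw [eval_map_apply, RingHom.mem_ker, limit_mk] at root
    obtain ⟨y, hy, hfy⟩ := exists_eventually_term_eval_eq_zero root (simple.map (limit F)).ne_zero
    have limit_eval : convergentSequences.limit F (f.eval y) = 0 := by
      rw [← root, ← eval_map_apply, ← eval_map_apply, hy]
    refine ⟨mk F y, ?_, by rw [RingHom.mem_ker, map_sub, limit_mk, hy, limit_mk, sub_self]⟩
    rw [IsRoot, eval_map_apply, ← map_zero (mk F)]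
    exact mk_eq_mk (by rwa [map_zero]) (by simpa only [map_zero] using hfy)

end ConvergentGerms

theorem exists_ringHom_germ [IsIntegrallyClosedIn F ℝ] :
    Nonempty (ℝ →+* Germ (atTop : Filter ℕ) F) :=
  let ⟨σ, _⟩ := exists_ringHom_section (π := ConvergentGerms.limit F)
    ConvergentGerms.limit_surjective
  ⟨(ConvergentGerms.germ F).comp σ⟩

end ConvergentGerms

section OrthogonalComplement

variable {F : Type*} [Field F] {m : ℕ} {U V : Submodule F (Fin m → F)}

lemma mem_orthF {y : Fin m → F} : y ∈ orthF U ↔ ∀ x ∈ U, x ⬝ᵥ y = 0 := Iff.rfl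

lemma eq_zero_of_dotProduct_self_eq_zero {R n : Type*} [Ring R] [IsFormallyReal R] [Fintype n]
    {x : n → R} (h : x ⬝ᵥ x = 0) : x = 0 := by
  classical
  funext i
  rw [dotProduct, ← Finset.add_sum_erase _ _ (Finset.mem_univ i)] at h
  have sq_eq_zero : x i * x i = 0 :=
    IsFormallyReal.eq_zero_of_add_right (.mul_self (x i)) (.sum fun j _ => .mul_self (x j)) h
  rwa [← sq, pow_eq_zero_iff two_ne_zero] at sq_eq_zero

lemma mem_orthF_span {s : Set (Fin m → F)} {y : Fin m → F} :
    y ∈ orthF (Submodule.span F s) ↔ ∀ x ∈ s, x ⬝ᵥ y = 0 :=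
  Submodule.span_le (p := LinearMap.ker ((dotProductBilin F F).flip y))

lemma le_orthF_comm : U ≤ orthF V ↔ V ≤ orthF U := by
  have imp {U V : Submodule F (Fin m → F)} (h : U ≤ orthF V) : V ≤ orthF U :=
    fun y hy x hx => (dotProduct_comm x y).trans (h hx y hy)
  exact ⟨imp, imp⟩

lemma orthF_sup : orthF (U ⊔ V) = orthF U ⊓ orthF V :=
  eq_of_forall_le_iff fun W => by
    rw [le_orthF_comm, sup_le_iff, le_inf_iff, le_orthF_comm, le_orthF_comm (V := V)]

variable [IsFormallyReal F]

lemma isCompl_orthF (U : Submodule F (Fin m → F)) : IsCompl U (orthF U) := by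
  have isRefl : (dotProductBilin F F : LinearMap.BilinForm F (Fin m → F)).IsRefl :=
    fun x y h => (dotProduct_comm y x).trans h
  refine (LinearMap.BilinForm.isCompl_orthogonal_iff_disjoint isRefl).mpr ?_
  exact Submodule.disjoint_def.mpr fun x hx hx' => eq_zero_of_dotProduct_self_eq_zero (hx' x hx)

lemma eq_orthF_of_le_of_sup_eq_top (h : V ≤ orthF U) (hsup : V ⊔ U = ⊤) : V = orthF U :=
  eq_of_le_of_inf_le_of_sup_le h ((isCompl_orthF U).symm.disjoint.le_bot.trans bot_le)
    (le_top.trans_eq hsup.symm)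

lemma orthF_orthF (U : Submodule F (Fin m → F)) : orthF (orthF U) = U :=
  (eq_orthF_of_le_of_sup_eq_top (le_orthF_comm.mp le_rfl) (isCompl_orthF U).sup_eq_top).symm

lemma orthF_eq_bot_iff : orthF U = ⊥ ↔ U = ⊤ := by
  refine ⟨fun h => ?_, fun h => ?_⟩
  · simpa only [h, sup_bot_eq] using (isCompl_orthF U).sup_eq_top
  · simpa only [h, top_inf_eq] using (isCompl_orthF U).inf_eq_bot

lemma inf_eq_orthF_sup (U V : Submodule F (Fin m → F)) :
    U ⊓ V = orthF (orthF U ⊔ orthF V) := by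
  rw [orthF_sup, orthF_orthF, orthF_orthF]

end OrthogonalComplement

section ColumnSpace

variable {F : Type*} [Field F] {m : ℕ} {n n' : Type*} [Fintype n] [Fintype n']

/-- The column space of a matrix, as a subspace of `F^m`. -/
def colSpace (A : Matrix (Fin m) n F) : Submodule F (Fin m → F) := LinearMap.range A.mulVecLin

lemma colSpace_eq_span (A : Matrix (Fin m) n F) : colSpace A = Submodule.span F (Set.range A.col) :=
  Matrix.range_mulVecLin A

lemma colSpace_eq_bot_iff {A : Matrix (Fin m) n F} : colSpace A = ⊥ ↔ A = 0 := by
  rw [colSpace_eq_span, Submodule.span_eq_bot, Set.forall_mem_range]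
  exact Matrix.ext_col_iff.symm

lemma colSpace_one : colSpace (1 : Matrix (Fin m) (Fin m) F) = ⊤ := by
  rw [colSpace, Matrix.mulVecLin_one, LinearMap.range_id]

lemma colSpace_fromCols (A : Matrix (Fin m) n F) (B : Matrix (Fin m) n' F) :
    colSpace (fromCols A B) = colSpace A ⊔ colSpace B := by
  have range_col : Set.range (fromCols A B).col = Set.range A.col ∪ Set.range B.col := by
    rw [← Set.Sum.elim_range]
    exact congrArg Set.range (funext (by rintro (j | j) <;> rfl))
  rw [colSpace_eq_span, range_col, Submodule.span_union, ← colSpace_eq_span, ← colSpace_eq_span]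

lemma colSpace_le_iff_exists_mul {A : Matrix (Fin m) n F} {B : Matrix (Fin m) n' F} :
    colSpace A ≤ colSpace B ↔ ∃ X : Matrix n' n F, A = B * X := by
  constructor
  · intro h
    have col_mem (j : n) : ∃ x, B *ᵥ x = A.col j :=
      h (colSpace_eq_span A ▸ Submodule.subset_span ⟨j, rfl⟩)
    choose X hX using col_mem
    exact ⟨(Matrix.of X)ᵀ, Matrix.ext_col fun j => (hX j).symm⟩
  · rintro ⟨X, rfl⟩
    rw [colSpace, Matrix.mulVecLin_mul]
    exact LinearMap.range_comp_le_range _ _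

lemma colSpace_le_orthF_colSpace_iff {A : Matrix (Fin m) n F} {B : Matrix (Fin m) n' F} :
    colSpace B ≤ orthF (colSpace A) ↔ Aᵀ * B = 0 := by
  rw [colSpace_eq_span A, colSpace_eq_span B, Submodule.span_le, Set.range_subset_iff]
  simp only [SetLike.mem_coe, mem_orthF_span, Set.forall_mem_range]
  exact forall_comm.trans Matrix.ext_iff

lemma exists_colSpace_eq (U : Submodule F (Fin m → F)) :
    ∃ (n : ℕ) (A : Matrix (Fin m) (Fin n) F), colSpace A = U := by
  obtain ⟨n, s, hs⟩ := Submodule.fg_iff_exists_fin_generating_family.mp (IsNoetherian.noetherian U)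
  exact ⟨n, (Matrix.of s)ᵀ, (colSpace_eq_span _).trans hs⟩

end ColumnSpace

section Specialization

variable {ι K F : Type*} {l : Filter ι} [Field K] [Field F] (ρ : K →+* Germ l F)

/-- A representative family of the ring homomorphism `ρ` into a ring of germs: the maps
`germRep ρ i : K → F` satisfy each instance of the ring homomorphism laws for eventually all `i`. -/
noncomputable def germRep (i : ι) (a : K) : F := (ρ a).out i

lemma coe_germRep (a : K) : ((fun i => germRep ρ i a : ι → F) : Germ l F) = ρ a :=
  Quotient.out_eq' _

lemma eventually_germRep_eq {a : K} {x : ι → F} (h : ρ a = x) : ∀ᶠ i in l, germRep ρ i a = x i :=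
  Germ.coe_eq.mp ((coe_germRep ρ a).trans h)

lemma eventually_map_germRep_eq {m n : Type*} [Finite m] [Finite n] {A : Matrix m n K}
    {B : ι → Matrix m n F} (h : ∀ j k, ρ (A j k) = (fun i => B i j k : ι → F)) :
    ∀ᶠ i in l, A.map (germRep ρ i) = B i := by
  have entries := eventually_all.mpr fun j =>
    eventually_all.mpr fun k => eventually_germRep_eq ρ (h j k)
  exact entries.mono fun i hi => Matrix.ext hi

lemma eventually_map_germRep_mul {m n p : Type*} [Finite m] [Fintype n] [Finite p]
    (A : Matrix m n K) (B : Matrix n p K) :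
    ∀ᶠ i in l, (A * B).map (germRep ρ i) = A.map (germRep ρ i) * B.map (germRep ρ i) := by
  refine eventually_map_germRep_eq ρ fun j k => ?_
  calc ρ ((A * B) j k)
    _ = ∑ x, ρ (A j x) * ρ (B x k) := by simp only [mul_apply, map_sum, map_mul]
    _ = ∑ x, Germ.coeRingHom l (fun i => germRep ρ i (A j x) * germRep ρ i (B x k)) :=
      Finset.sum_congr rfl fun x _ => by rw [← coe_germRep, ← coe_germRep]; rfl
    _ = Germ.coeRingHom l (∑ x, fun i => germRep ρ i (A j x) * germRep ρ i (B x k)) :=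
      (map_sum _ _ _).symm
    _ = Germ.coeRingHom l fun i => (A.map (germRep ρ i) * B.map (germRep ρ i)) j k :=
      congrArg _ (Finset.sum_fn _ _)

lemma eventually_map_germRep_zero (m n : Type*) [Finite m] [Finite n] :
    ∀ᶠ i in l, (0 : Matrix m n K).map (germRep ρ i) = 0 :=
  eventually_map_germRep_eq ρ fun _ _ => map_zero ρ

lemma eventually_map_germRep_one (m : Type*) [Finite m] [DecidableEq m] :
    ∀ᶠ i in l, (1 : Matrix m m K).map (germRep ρ i) = 1 := by
  refine eventually_map_germRep_eq ρ fun j k => ?_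
  rcases eq_or_ne j k with rfl | hjk
  · simp only [one_apply_eq]
    exact map_one ρ
  · simp only [one_apply_ne hjk]
    exact map_zero ρ

lemma eq_zero_of_eventually_map_germRep_eq_zero [l.NeBot] {m n : Type*} {A : Matrix m n K}
    (h : ∀ᶠ i in l, A.map (germRep ρ i) = 0) : A = 0 := by
  ext j k
  refine (map_eq_zero ρ).mp ?_
  rw [← coe_germRep]
  exact Germ.coe_eq.mpr (h.mono fun i hi => congrFun₂ hi j k)

variable {m : ℕ}

lemma eventually_colSpace_map_le {n n' : Type*} [Fintype n] [Fintype n'] {A : Matrix (Fin m) n K}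
    {B : Matrix (Fin m) n' K} (h : colSpace A ≤ colSpace B) :
    ∀ᶠ i in l, colSpace (A.map (germRep ρ i)) ≤ colSpace (B.map (germRep ρ i)) := by
  obtain ⟨X, rfl⟩ := colSpace_le_iff_exists_mul.mp h
  filter_upwards [eventually_map_germRep_mul ρ B X] with i hi
  exact colSpace_le_iff_exists_mul.mpr ⟨_, hi⟩

/-- The specialization at `i` of a subspace `U` of `K^m`: the span in `F^m` of the images under
`germRep ρ i` of a fixed spanning family of `U`. -/
noncomputable def specialize (i : ι) (U : Submodule K (Fin m → K)) : Submodule F (Fin m → F) :=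
  colSpace ((exists_colSpace_eq U).choose_spec.choose.map (germRep ρ i))

lemma eventually_specialize_colSpace {n : Type*} [Fintype n] (A : Matrix (Fin m) n K) :
    ∀ᶠ i in l, specialize ρ i (colSpace A) = colSpace (A.map (germRep ρ i)) := by
  have h := (exists_colSpace_eq (colSpace A)).choose_spec.choose_spec
  filter_upwards [eventually_colSpace_map_le ρ h.le, eventually_colSpace_map_le ρ h.ge] with i
    using le_antisymm

lemma eventually_specialize_bot : ∀ᶠ i in l, specialize ρ i (⊥ : Submodule K (Fin m → K)) = ⊥ := by
  rw [← (colSpace_eq_bot_iff (n := Fin 0)).mpr rfl]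
  filter_upwards [eventually_specialize_colSpace ρ (0 : Matrix (Fin m) (Fin 0) K),
    eventually_map_germRep_zero ρ (Fin m) (Fin 0)] with i hi h0
  rw [hi, h0, colSpace_eq_bot_iff]

lemma eventually_specialize_top : ∀ᶠ i in l, specialize ρ i (⊤ : Submodule K (Fin m → K)) = ⊤ := by
  rw [← colSpace_one]
  filter_upwards [eventually_specialize_colSpace ρ (1 : Matrix (Fin m) (Fin m) K),
    eventually_map_germRep_one ρ (Fin m)] with i hi h1
  rw [hi, h1, colSpace_one]

lemma eventually_specialize_sup (U V : Submodule K (Fin m → K)) :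
    ∀ᶠ i in l, specialize ρ i (U ⊔ V) = specialize ρ i U ⊔ specialize ρ i V := by
  obtain ⟨_, A, rfl⟩ := exists_colSpace_eq U
  obtain ⟨_, B, rfl⟩ := exists_colSpace_eq V
  filter_upwards [eventually_specialize_colSpace ρ A, eventually_specialize_colSpace ρ B,
    eventually_specialize_colSpace ρ (fromCols A B)] with i hA hB hAB
  rw [← colSpace_fromCols, hAB, fromCols_map, colSpace_fromCols, hA, hB]

lemma eventually_specialize_le_orthF {U V : Submodule K (Fin m → K)} (h : V ≤ orthF U) :
    ∀ᶠ i in l, specialize ρ i V ≤ orthF (specialize ρ i U) := by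
  obtain ⟨_, A, rfl⟩ := exists_colSpace_eq U
  obtain ⟨_, B, rfl⟩ := exists_colSpace_eq V
  filter_upwards [eventually_specialize_colSpace ρ A, eventually_specialize_colSpace ρ B,
    eventually_map_germRep_mul ρ Aᵀ B, eventually_map_germRep_zero ρ (Fin _) (Fin _)]
    with i hA hB hmul h0
  rw [hA, hB, colSpace_le_orthF_colSpace_iff, ← transpose_map, ← hmul,
    colSpace_le_orthF_colSpace_iff.mp h, h0]

lemma eq_bot_of_eventually_specialize_eq_bot [l.NeBot] {U : Submodule K (Fin m → K)}
    (h : ∀ᶠ i in l, specialize ρ i U = ⊥) : U = ⊥ := by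
  rw [← (exists_colSpace_eq U).choose_spec.choose_spec, colSpace_eq_bot_iff]
  exact eq_zero_of_eventually_map_germRep_eq_zero ρ (h.mono fun i => colSpace_eq_bot_iff.mp)

variable [IsFormallyReal K] [IsFormallyReal F]

lemma eventually_specialize_orthF (U : Submodule K (Fin m → K)) :
    ∀ᶠ i in l, specialize ρ i (orthF U) = orthF (specialize ρ i U) := by
  filter_upwards [eventually_specialize_le_orthF ρ (le_refl (orthF U)), eventually_specialize_top ρ,
    eventually_specialize_sup ρ (orthF U) U] with i hle htop hsup
  rw [sup_comm, (isCompl_orthF U).sup_eq_top, htop] at hsup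
  exact eq_orthF_of_le_of_sup_eq_top hle hsup.symm

lemma eventually_specialize_inf (U V : Submodule K (Fin m → K)) :
    ∀ᶠ i in l, specialize ρ i (U ⊓ V) = specialize ρ i U ⊓ specialize ρ i V := by
  rw [inf_eq_orthF_sup]
  filter_upwards [eventually_specialize_orthF ρ U, eventually_specialize_orthF ρ V,
    eventually_specialize_sup ρ (orthF U) (orthF V),
    eventually_specialize_orthF ρ (orthF U ⊔ orthF V)] with i hU hV hsup horth
  rw [horth, hsup, hU, hV, inf_eq_orthF_sup]

lemma eq_top_of_eventually_specialize_eq_top [l.NeBot] {U : Submodule K (Fin m → K)}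
    (h : ∀ᶠ i in l, specialize ρ i U = ⊤) : U = ⊤ := by
  refine orthF_eq_bot_iff.mp (eq_bot_of_eventually_specialize_eq_bot ρ ?_)
  filter_upwards [h, eventually_specialize_orthF ρ U] with i htop horth
  rw [horth, orthF_eq_bot_iff, htop]

lemma OLTerm.eventually_evalF_specialize (t : OLTerm) (v : ℕ → Submodule K (Fin m → K)) :
    ∀ᶠ i in l, t.evalF (fun j => specialize ρ i (v j)) = specialize ρ i (t.evalF v) := by
  induction t with
  | var j => exact .of_forall fun i => rfl
  | zero => exact (eventually_specialize_bot ρ).mono fun i => Eq.symm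
  | one => exact (eventually_specialize_top ρ).mono fun i => Eq.symm
  | inf t s ht hs =>
    filter_upwards [ht, hs, eventually_specialize_inf ρ (t.evalF v) (s.evalF v)] with i ht hs h
    simp only [evalF, ht, hs, h]
  | sup t s ht hs =>
    filter_upwards [ht, hs, eventually_specialize_sup ρ (t.evalF v) (s.evalF v)] with i ht hs h
    simp only [evalF, ht, hs, h]
  | compl t ht =>
    filter_upwards [ht, eventually_specialize_orthF ρ (t.evalF v)] with i ht h
    simp only [evalF, ht, h]

theorem OLTerm.evalF_eq_top_of_ringHom_germ [l.NeBot] (ρ : K →+* Germ l F) {t : OLTerm}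
    (h : ∀ v : ℕ → Submodule F (Fin m → F), t.evalF v = ⊤) (v : ℕ → Submodule K (Fin m → K)) :
    t.evalF v = ⊤ :=
  eq_top_of_eventually_specialize_eq_top ρ <|
    (t.eventually_evalF_specialize ρ v).mono fun _ hi => hi.symm.trans (h _)

end Specialization

section RealEmbedding

variable {H : Type*} [NormedAddCommGroup H] [InnerProductSpace ℂ H] {m : ℕ}

lemma exists_linearIsometry_of_finrank_le {𝕜 E E' : Type*} [RCLike 𝕜] [NormedAddCommGroup E]
    [InnerProductSpace 𝕜 E] [FiniteDimensional 𝕜 E] [NormedAddCommGroup E']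
    [InnerProductSpace 𝕜 E'] [FiniteDimensional 𝕜 E']
    (h : Module.finrank 𝕜 E ≤ Module.finrank 𝕜 E') : Nonempty (E →ₗᵢ[𝕜] E') := by
  let b := stdOrthonormalBasis 𝕜 E
  let b' := stdOrthonormalBasis 𝕜 E'
  have orthonormal : Orthonormal 𝕜 (b.toBasis.constr 𝕜 (b' ∘ Fin.castLE h) ∘ b.toBasis) := by
    convert b'.orthonormal.comp (Fin.castLE h) (Fin.castLE_injective h)
    exact funext fun i => b.toBasis.constr_basis 𝕜 _ i
  exact ⟨(b.toBasis.constr 𝕜 _).isometryOfOrthonormal (by simp) orthonormal⟩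

lemma exists_leftInverse_adjoint_of_finrank_le [FiniteDimensional ℂ H]
    (hm : 2 * Module.finrank ℂ H ≤ m) :
    ∃ (j : H →ₗ[ℝ] Fin m → ℝ) (a : (Fin m → ℝ) →ₗ[ℝ] H),
      Function.LeftInverse a j ∧ ∀ x y, j x ⬝ᵥ y = (inner ℂ x (a y)).re := by
  let _ : InnerProductSpace ℝ H := .complexToReal
  have : FiniteDimensional ℝ H := .complexToReal H
  obtain ⟨φ⟩ : Nonempty (H →ₗᵢ[ℝ] EuclideanSpace ℝ (Fin m)) :=
    exists_linearIsometry_of_finrank_le <| by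
      rwa [finrank_real_of_complex, finrank_euclideanSpace_fin]
  let e := WithLp.linearEquiv 2 ℝ (Fin m → ℝ)
  refine ⟨e ∘ₗ φ.toLinearMap, φ.toLinearMap.adjoint ∘ₗ e.symm, fun x => ?_, fun x y => ?_⟩
  · refine ext_inner_left ℝ fun z => ?_
    rw [LinearMap.comp_apply, LinearMap.comp_apply, LinearEquiv.coe_coe, LinearEquiv.coe_coe,
      e.symm_apply_apply, LinearMap.adjoint_inner_right]
    exact φ.inner_map_map z x
  · calc
      e (φ x) ⬝ᵥ y = inner ℝ (φ x) (e.symm y) := dotProduct_comm _ _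
      _ = inner ℝ x (φ.toLinearMap.adjoint (e.symm y)) :=
        (LinearMap.adjoint_inner_right φ.toLinearMap x (e.symm y)).symm

lemma mem_orthogonal_iff_re_inner {U : Submodule ℂ H} {y : H} :
    y ∈ Uᗮ ↔ ∀ x ∈ U, (inner ℂ x y).re = 0 := by
  refine ⟨fun h x hx => congrArg Complex.re (h x hx), fun h x hx => Complex.ext (h x hx) ?_⟩
  simpa [inner_smul_left] using h (Complex.I • x) (U.smul_mem _ hx)

/-- Subspaces `V` of `ℝ^m` and `U` of a complex space are matched by `j : H → ℝ^m` and
`a : ℝ^m → H` if these restrict to maps between `U` and `V`. When `j` is a real isometric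
embedding with adjoint `a`, every `U` has a match, and matches are preserved by the ortholattice
operations. -/
def Matched (j : H →ₗ[ℝ] Fin m → ℝ) (a : (Fin m → ℝ) →ₗ[ℝ] H) (V : Submodule ℝ (Fin m → ℝ))
    (U : Submodule ℂ H) : Prop :=
  (∀ x ∈ U, j x ∈ V) ∧ ∀ y ∈ V, a y ∈ U

namespace Matched

variable {j : H →ₗ[ℝ] Fin m → ℝ} {a : (Fin m → ℝ) →ₗ[ℝ] H} {V V' : Submodule ℝ (Fin m → ℝ)}
  {U U' : Submodule ℂ H}

lemma map (haj : Function.LeftInverse a j) (U : Submodule ℂ H) :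
    Matched j a ((U.restrictScalars ℝ).map j) U := by
  refine ⟨fun x hx => ⟨x, hx, rfl⟩, ?_⟩
  rintro _ ⟨x, hx, rfl⟩
  exact (haj x).symm ▸ hx

lemma bot : Matched j a ⊥ ⊥ := by
  simp [Matched]

lemma top : Matched j a ⊤ ⊤ := ⟨fun _ _ => trivial, fun _ _ => trivial⟩

lemma inf (h : Matched j a V U) (h' : Matched j a V' U') : Matched j a (V ⊓ V') (U ⊓ U') :=
  ⟨fun x hx => ⟨h.1 x hx.1, h'.1 x hx.2⟩, fun y hy => ⟨h.2 y hy.1, h'.2 y hy.2⟩⟩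

lemma sup (h : Matched j a V U) (h' : Matched j a V' U') : Matched j a (V ⊔ V') (U ⊔ U') := by
  constructor
  · intro x hx
    obtain ⟨z, hz, z', hz', rfl⟩ := Submodule.mem_sup.mp hx
    exact map_add j z z' ▸ Submodule.add_mem_sup (h.1 z hz) (h'.1 z' hz')
  · intro y hy
    obtain ⟨z, hz, z', hz', rfl⟩ := Submodule.mem_sup.mp hy
    exact map_add a z z' ▸ Submodule.add_mem_sup (h.2 z hz) (h'.2 z' hz')

lemma compl (hadj : ∀ x y, j x ⬝ᵥ y = (inner ℂ x (a y)).re) (h : Matched j a V U) :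
    Matched j a (orthF V) Uᗮ := by
  constructor
  · intro x hx
    refine mem_orthF.mpr fun y hy => ?_
    rw [dotProduct_comm, hadj, ← inner_conj_symm, Complex.conj_re]
    exact mem_orthogonal_iff_re_inner.mp hx _ (h.2 y hy)
  · intro y hy
    refine mem_orthogonal_iff_re_inner.mpr fun x hx => ?_
    rw [← hadj]
    exact hy _ (h.1 x hx)

lemma eq_top (haj : Function.LeftInverse a j) (h : Matched j a ⊤ U) : U = ⊤ :=
  Submodule.eq_top_iff'.mpr fun x => haj x ▸ h.2 (j x) trivial

end Matched

lemma OLTerm.matched_evalF_evalSub {j : H →ₗ[ℝ] Fin m → ℝ} {a : (Fin m → ℝ) →ₗ[ℝ] H}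
    (hadj : ∀ x y, j x ⬝ᵥ y = (inner ℂ x (a y)).re) {v : ℕ → Submodule ℝ (Fin m → ℝ)}
    {w : ℕ → Submodule ℂ H} (h : ∀ i, Matched j a (v i) (w i)) (t : OLTerm) :
    Matched j a (t.evalF v) (t.evalSub w) := by
  induction t with
  | var i => exact h i
  | zero => exact .bot
  | one => exact .top
  | inf t s ht hs => exact ht.inf hs
  | sup t s ht hs => exact ht.sup hs
  | compl t ht => exact ht.compl hadj

theorem OLTerm.evalSub_eq_top_of_evalF_eq_top [FiniteDimensional ℂ H]
    (hm : 2 * Module.finrank ℂ H ≤ m) {t : OLTerm}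
    (h : ∀ v : ℕ → Submodule ℝ (Fin m → ℝ), t.evalF v = ⊤) (w : ℕ → Submodule ℂ H) :
    t.evalSub w = ⊤ := by
  obtain ⟨j, a, haj, hadj⟩ := exists_leftInverse_adjoint_of_finrank_le hm
  have matched := t.matched_evalF_evalSub hadj fun i => .map haj (w i)
  exact (h _ ▸ matched).eq_top haj

end RealEmbedding

lemma isFormallyReal_of_injective {R S : Type*} [Semiring R] [Semiring S] [IsFormallyReal S]
    {f : R →+* S} (hf : Function.Injective f) : IsFormallyReal R where
  not_isSumNonzeroSq_zero h := by
    have map_isSumNonzeroSq {x : R} (hx : IsSumNonzeroSq x) : IsSumNonzeroSq (f x) := by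
      induction hx with
      | sq ha => exact map_mul f _ _ ▸ .sq ((map_ne_zero_iff f hf).mpr ha)
      | sq_add ha _ ih =>
        rw [map_add, map_mul]
        exact .sq_add ((map_ne_zero_iff f hf).mpr ha) ih
    exact IsFormallyReal.not_isSumNonzeroSq_zero (map_zero f ▸ map_isSumNonzeroSq h)

theorem stmt16_general {F : Type*} [Field F] [Algebra F ℝ] [IsIntegrallyClosedIn F ℝ] {H : Type*}
    [NormedAddCommGroup H] [InnerProductSpace ℂ H] [FiniteDimensional ℂ H] (t : OLTerm) {m : ℕ}
    (hm : 2 * Module.finrank ℂ H ≤ m) (h : ∀ v : ℕ → Submodule F (Fin m → F), t.evalF v = ⊤)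
    (v : ℕ → Submodule ℂ H) : t.evalSub v = ⊤ := by
  have : IsFormallyReal F := isFormallyReal_of_injective (algebraMap F ℝ).injective
  obtain ⟨ρ⟩ := exists_ringHom_germ (F := F)
  exact OLTerm.evalSub_eq_top_of_evalF_eq_top hm (OLTerm.evalF_eq_top_of_ringHom_germ ρ h) v

instance : IsIntegrallyClosedIn RealAlg ℝ :=
  inferInstanceAs (IsIntegrallyClosedIn (integralClosure ℚ ℝ) ℝ)

/-- Let `𝔽` be the field of real algebraic numbers.  If an ortholattice term `t` is a
tautology of the subspace ortholattice `L(𝔽^{2^n})` for every `n ≥ 0`, then `t` is a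
tautology of the subspace ortholattice `L(ℂ^k)` for every `k ≥ 1`. -/
theorem stmt16 (t : OLTerm)
    (h : ∀ n : ℕ, ∀ v : ℕ → Submodule RealAlg (Fin (2 ^ n) → RealAlg), t.evalF v = ⊤) :
    ∀ k : ℕ, 1 ≤ k → ∀ v : ℕ → Submodule ℂ (EuclideanSpace ℂ (Fin k)), t.evalSub v = ⊤ := by
  intro k _ v
  exact stmt16_general t (by simpa using Nat.lt_two_pow_self.le) (h (2 * k)) v
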